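/- Let n ≥ 1 be a natural number and let a ∈ L_T satisfy λ̃_{2n−1} ≺ a and ∫_0^T |a(x)| dx ≤ T·λ̃_{2n−1} + (2π(2n−1)(2n+1)/T)·cot((2n−1)π/(2(2n+1))). Then the antiperiodic problem u'' + a(x)u = 0 on (0,T), u(0) + u(T) = 0, u'(0) + u'(T) = 0, has only the trivial solution u ≡ 0. -/

import Mathlib

open MeasureTheory Set Real

/-- `u` is a solution of `u'' + a·u = 0` on `[c,d]`, with derivative function `v`. -/
def IsSolOn (a u v : ℝ → ℝ) (c d : ℝ) : Prop :=
  (∀ x ∈ Set.Icc c d, HasDerivWithinAt u (v x) (Set.Icc c d) x) ∧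
  (∀ x ∈ Set.Icc c d, v x = v c - ∫ t in c..x, a t * u t)

/-- Membership in `L_T`: measurable, `T`-periodic and integrable on `[0,T]`. -/
def MemLT (T : ℝ) (a : ℝ → ℝ) : Prop :=
  Measurable a ∧ (∀ x, a (x + T) = a x) ∧ IntegrableOn a (Set.Icc 0 T)

/-- `c ≺ d` : `c ≤ d` a.e. on `[0,T]` and `c < d` on a set of positive measure. -/
def Prec (T : ℝ) (c d : ℝ → ℝ) : Prop :=
  (∀ᵐ x ∂(volume.restrict (Set.Icc 0 T)), c x ≤ d x) ∧
  0 < volume {x ∈ Set.Icc 0 T | c x < d x}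

/-- `(u,v)` solves the periodic problem `u'' + a u = 0`, `u(0)=u(T)`, `u'(0)=u'(T)`. -/
def PeriodicSol (T : ℝ) (a u v : ℝ → ℝ) : Prop :=
  IsSolOn a u v 0 T ∧ u 0 = u T ∧ v 0 = v T

/-- `(u,v)` solves the antiperiodic problem `u'' + a u = 0`, `u(0)+u(T)=0`, `u'(0)+u'(T)=0`. -/
def AntiperiodicSol (T : ℝ) (a u v : ℝ → ℝ) : Prop :=
  IsSolOn a u v 0 T ∧ u 0 + u T = 0 ∧ v 0 + v T = 0

/-- The `(2n-1)`-st periodic eigenvalue `λ_{2n-1} = 4 n² π² / T²`. -/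
noncomputable def lam (T : ℝ) (n : ℕ) : ℝ := 4 * (n : ℝ) ^ 2 * Real.pi ^ 2 / T ^ 2

/-- The `(2n-1)`-st antiperiodic eigenvalue `λ̃_{2n-1} = (2n-1)² π² / T²`. -/
noncomputable def lamT (T : ℝ) (n : ℕ) : ℝ := (2 * (n : ℝ) - 1) ^ 2 * Real.pi ^ 2 / T ^ 2

/-- The set `Λ_n`. -/
def LambdaN (T : ℝ) (n : ℕ) : Set (ℝ → ℝ) :=
  {a | MemLT T a ∧ Prec T (fun _ => lam T n) a ∧
    ∃ u v : ℝ → ℝ, PeriodicSol T a u v ∧ ∃ x ∈ Set.Icc 0 T, u x ≠ 0}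

/-- The set `Λ̃_n`. -/
def LambdaTildeN (T : ℝ) (n : ℕ) : Set (ℝ → ℝ) :=
  {a | MemLT T a ∧ Prec T (fun _ => lamT T n) a ∧
    ∃ u v : ℝ → ℝ, AntiperiodicSol T a u v ∧ ∃ x ∈ Set.Icc 0 T, u x ≠ 0}

/-- The constant `β_{1,n}` of the periodic `L¹` Lyapunov inequality. -/
noncomputable def beta1 (T : ℝ) (n : ℕ) : ℝ :=
  8 * Real.pi * (n : ℝ) * ((n : ℝ) + 1) / T * Real.cot ((n : ℝ) * Real.pi / (2 * ((n : ℝ) + 1)))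

/-- The constant `β̃_{1,n}` of the antiperiodic `L¹` Lyapunov inequality. -/
noncomputable def betaT1 (T : ℝ) (n : ℕ) : ℝ :=
  2 * Real.pi * (2 * (n : ℝ) - 1) * (2 * (n : ℝ) + 1) / T *
    Real.cot ((2 * (n : ℝ) - 1) * Real.pi / (2 * (2 * (n : ℝ) + 1)))

/-- absolutely continuous on `[0,T]` with a.e. derivative `f'`. -/
def ACD (T : ℝ) (f f' : ℝ → ℝ) : Prop :=
  AbsolutelyContinuousOnInterval f 0 T ∧ ∀ᵐ x, x ∈ Set.uIcc 0 T → HasDerivAt f (f' x) x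

lemma ACD.congr_deriv {T : ℝ} {f f' g' : ℝ → ℝ} (h : ACD T f f')
    (hg : ∀ᵐ x, x ∈ Set.uIcc 0 T → f' x = g' x) : ACD T f g' := by
  refine ⟨h.1, ?_⟩
  filter_upwards [h.2, hg] with x h1 h2 hx
  rw [← h2 hx]; exact h1 hx

lemma ACD.add {T : ℝ} {f f' g g' : ℝ → ℝ} (hf : ACD T f f') (hg : ACD T g g') :
    ACD T (fun x => f x + g x) (fun x => f' x + g' x) := by
  refine ⟨hf.1.fun_add hg.1, ?_⟩
  filter_upwards [hf.2, hg.2] with x h1 h2 hx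
  exact (h1 hx).add (h2 hx)

lemma ACD.mul {T : ℝ} {f f' g g' : ℝ → ℝ} (hf : ACD T f f') (hg : ACD T g g') :
    ACD T (fun x => f x * g x) (fun x => f' x * g x + f x * g' x) := by
  refine ⟨hf.1.fun_mul hg.1, ?_⟩
  filter_upwards [hf.2, hg.2] with x h1 h2 hx
  exact (h1 hx).mul (h2 hx)

lemma ACD.const (T c : ℝ) : ACD T (fun _ => c) (fun _ => 0) := by
  refine ⟨?_, ?_⟩
  · exact (contDiff_const.contDiffOn).absolutelyContinuousOnInterval
  · filter_upwards with x hx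
    exact hasDerivAt_const _ _

lemma ACD.const_mul {T : ℝ} {f f' : ℝ → ℝ} (c : ℝ) (hf : ACD T f f') :
    ACD T (fun x => c * f x) (fun x => c * f' x) := by
  refine ⟨hf.1.const_mul c, ?_⟩
  filter_upwards [hf.2] with x h1 hx
  exact (h1 hx).const_mul c

lemma ACD.of_integral {T : ℝ} {g : ℝ → ℝ} (hg : IntervalIntegrable g volume 0 T) :
    ACD T (fun x => ∫ t in (0:ℝ)..x, g t) g := by
  refine ⟨hg.absolutelyContinuousOnInterval_intervalIntegral (by simp), ?_⟩
  filter_upwards [hg.ae_hasDerivAt_integral] with x h hx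
  exact h hx 0 (by simp)

lemma AC_comp {T : ℝ} {f : ℝ → ℝ} (hf : AbsolutelyContinuousOnInterval f 0 T) {F : ℝ → ℝ}
    {K : NNReal} (hF : LipschitzOnWith K F (f '' Set.uIcc 0 T)) :
    AbsolutelyContinuousOnInterval (fun x => F (f x)) 0 T := by
  unfold AbsolutelyContinuousOnInterval at *
  have h0 := hf.const_mul (K : ℝ)
  rw [mul_zero] at h0
  refine tendsto_of_tendsto_of_tendsto_of_le_of_le' tendsto_const_nhds h0 ?_ ?_
  · filter_upwards with E
    exact Finset.sum_nonneg (fun i _ => dist_nonneg)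
  · have : ∀ᶠ E in AbsolutelyContinuousOnInterval.totalLengthFilter ⊓
        Filter.principal (AbsolutelyContinuousOnInterval.disjWithin 0 T),
        E ∈ AbsolutelyContinuousOnInterval.disjWithin 0 T :=
      Filter.mem_inf_of_right (Filter.mem_principal_self _)
    filter_upwards [this] with E hE
    rw [Finset.mul_sum]
    refine Finset.sum_le_sum (fun i hi => ?_)
    exact hF.dist_le_mul _ ⟨_, (hE.1 i hi).1, rfl⟩ _ ⟨_, (hE.1 i hi).2, rfl⟩

lemma ACD.comp {T : ℝ} {f f' F F' : ℝ → ℝ} (hf : ACD T f f')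
    (hF : ∀ y, HasDerivAt F (F' y) y) (hF' : Continuous F') :
    ACD T (fun x => F (f x)) (fun x => F' (f x) * f' x) := by
  refine ⟨?_, ?_⟩
  · have hc : IsCompact (f '' Set.uIcc 0 T) := isCompact_uIcc.image_of_continuousOn hf.1.continuousOn
    have hF1 : ContDiff ℝ 1 F := by
      rw [contDiff_one_iff_deriv]
      refine ⟨fun y => (hF y).differentiableAt, ?_⟩
      rw [show deriv F = F' from funext fun y => (hF y).deriv]
      exact hF'
    have hconv : Convex ℝ (f '' Set.uIcc 0 T) := by
      have : IsPreconnected (f '' Set.uIcc 0 T) :=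
        isPreconnected_uIcc.image _ hf.1.continuousOn
      exact this.ordConnected.convex
    obtain ⟨K, hK⟩ := hF1.contDiffOn.exists_lipschitzOnWith (by decide) hconv hc
    exact AC_comp hf.1 hK
  · filter_upwards [hf.2] with x h hx
    exact (hF (f x)).comp x (h hx)

lemma ACD.integrable {T : ℝ} {f f' : ℝ → ℝ} (hf : ACD T f f') :
    IntervalIntegrable f' volume 0 T := by
  refine hf.1.intervalIntegrable_deriv.congr_ae ?_
  refine (ae_restrict_iff' measurableSet_uIoc).2 ?_
  filter_upwards [hf.2] with x h hx
  exact (h (uIoc_subset_uIcc hx)).deriv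

lemma ACD.integral_eq {T : ℝ} {f f' : ℝ → ℝ} (hf : ACD T f f') {x y : ℝ}
    (hx : x ∈ Set.uIcc 0 T) (hy : y ∈ Set.uIcc 0 T) :
    ∫ t in x..y, f' t = f y - f x := by
  have hs := Set.uIcc_subset_uIcc hx hy
  rw [← (hf.1.mono hs).integral_deriv_eq_sub]
  apply intervalIntegral.integral_congr_ae
  filter_upwards [hf.2] with t h ht
  exact (h (hs (uIoc_subset_uIcc ht))).deriv.symm

lemma ACD.le {T : ℝ} {f f' : ℝ → ℝ} (hT : 0 ≤ T) (hf : ACD T f f') {x y : ℝ}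
    (hx : x ∈ Set.Icc 0 T) (hy : y ∈ Set.Icc 0 T) (hxy : x ≤ y)
    (h : ∀ᵐ t, t ∈ Set.Icc 0 T → 0 ≤ f' t) : f x ≤ f y := by
  rw [← Set.uIcc_of_le hT] at hx hy
  have h1 := hf.integral_eq hx hy
  have : 0 ≤ ∫ t in x..y, f' t := by
    refine intervalIntegral.integral_nonneg_of_ae_restrict hxy ?_
    refine (ae_restrict_iff' measurableSet_Icc).2 ?_
    filter_upwards [h] with t ht htt
    rw [Set.uIcc_of_le hT] at hx hy
    exact ht ⟨hx.1.trans htt.1, htt.2.trans hy.2⟩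
  linarith

lemma intG {α : ℝ} (h0 : 0 < α) (h1 : α < π / 2) :
    ∫ t in (0:ℝ)..π, 1 / max (sin t ^ 2) (sin α ^ 2) = 2 * α / sin α ^ 2 + 2 * Real.cot α := by
  have hs : 0 < sin α := sin_pos_of_pos_of_lt_pi h0 (by linarith [pi_pos])
  have hcont : Continuous (fun t : ℝ => 1 / max (sin t ^ 2) (sin α ^ 2)) := by
    refine continuous_const.div (by fun_prop) (fun t => ?_)
    have : 0 < max (sin t ^ 2) (sin α ^ 2) := lt_max_of_lt_right (by positivity)
    exact this.ne'
  have hi : ∀ x y : ℝ, IntervalIntegrable (fun t : ℝ => 1 / max (sin t ^ 2) (sin α ^ 2)) volume x y :=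
    fun x y => hcont.intervalIntegrable x y
  rw [← intervalIntegral.integral_add_adjacent_intervals (hi 0 α) (hi α π),
    ← intervalIntegral.integral_add_adjacent_intervals (hi α (π - α)) (hi (π - α) π)]
  have e1 : ∫ t in (0:ℝ)..α, 1 / max (sin t ^ 2) (sin α ^ 2) = α / sin α ^ 2 := by
    have : ∫ t in (0:ℝ)..α, 1 / max (sin t ^ 2) (sin α ^ 2) = ∫ t in (0:ℝ)..α, 1 / (sin α ^ 2) := by
      apply intervalIntegral.integral_congr
      intro t ht
      rw [Set.uIcc_of_le h0.le] at ht
      have a1 : 0 ≤ sin t := sin_nonneg_of_nonneg_of_le_pi ht.1 (by linarith [ht.2])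
      have a2 : sin t ≤ sin α := sin_le_sin_of_le_of_le_pi_div_two (by linarith [ht.1]) h1.le ht.2
      have a3 : sin t ^ 2 ≤ sin α ^ 2 := by gcongr
      simp only [max_eq_right a3]
    rw [this, intervalIntegral.integral_const]; simp; ring
  have e3 : ∫ t in (π - α)..π, 1 / max (sin t ^ 2) (sin α ^ 2) = α / sin α ^ 2 := by
    rw [← e1]
    have := intervalIntegral.integral_comp_sub_left
      (fun t : ℝ => 1 / max (sin t ^ 2) (sin α ^ 2)) (a := 0) (b := α) π
    simp only [sin_pi_sub, sub_zero] at this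
    exact this.symm
  have e2 : ∫ t in α..(π - α), 1 / max (sin t ^ 2) (sin α ^ 2) = 2 * Real.cot α := by
    have hle : α ≤ π - α := by linarith
    have : ∫ t in α..(π - α), 1 / max (sin t ^ 2) (sin α ^ 2)
        = (-(cos (π - α) / sin (π - α))) - (-(cos α / sin α)) := by
      refine intervalIntegral.integral_eq_sub_of_hasDerivAt
        (f := fun t => -(cos t / sin t)) ?_ (hi _ _)
      intro t ht
      rw [Set.uIcc_of_le hle] at ht
      have a1 : 0 < sin t := sin_pos_of_pos_of_lt_pi (by linarith [ht.1]) (by linarith [ht.2])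
      have a2 : sin α ≤ sin t := by
        rcases le_total t (π / 2) with h | h
        · exact sin_le_sin_of_le_of_le_pi_div_two (by linarith) h ht.1
        · rw [← sin_pi_sub t]
          exact sin_le_sin_of_le_of_le_pi_div_two (by linarith) (by linarith) (by linarith [ht.2])
      have a3 : sin α ^ 2 ≤ sin t ^ 2 := by gcongr
      rw [max_eq_left a3]
      convert! ((hasDerivAt_cos t).div (hasDerivAt_sin t) a1.ne').neg using 1
      field_simp
      linarith [sin_sq_add_cos_sq t]
    rw [this, cos_pi_sub, sin_pi_sub, Real.cot_eq_cos_div_sin]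
    ring
  rw [e1, e2, e3]; ring

lemma core {T ω : ℝ} (hT : 0 < T) (hω : 0 < ω) {n : ℕ} (hn : 1 ≤ n)
    (hωT : ω * T = (2 * (n : ℝ) - 1) * π) {θ b : ℝ → ℝ}
    (hθ : ACD T θ (fun x => ω + b x * sin (θ x) ^ 2))
    (hb : IntervalIntegrable b volume 0 T)
    (hb0 : ∀ᵐ x, x ∈ Set.Icc 0 T → 0 ≤ b x)
    (hrise : (2 * (n : ℝ) + 1) * π ≤ θ T - θ 0) :
    2 * (2 * (n : ℝ) + 1) * Real.cot ((2 * (n : ℝ) - 1) * π / (2 * (2 * (n : ℝ) + 1)))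
      < ∫ x in (0:ℝ)..T, b x := by
  have hn' : (1 : ℝ) ≤ n := by exact_mod_cast hn
  have hpi := pi_pos
  set α := (2 * (n : ℝ) - 1) * π / (2 * (2 * (n : ℝ) + 1)) with hα
  have hα0 : 0 < α := by
    have : 0 < 2 * (n : ℝ) - 1 := by linarith
    positivity
  have hα1 : α < π / 2 := by
    rw [hα, div_lt_div_iff₀ (by positivity) (by positivity)]
    nlinarith
  have hs : 0 < sin α := sin_pos_of_pos_of_lt_pi hα0 (by linarith)
  have hs1 : sin α < 1 := by
    rw [← sin_pi_div_two]
    exact sin_lt_sin_of_lt_of_le_pi_div_two (by linarith) le_rfl hα1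
  set G : ℝ → ℝ := fun t => 1 / max (sin t ^ 2) (sin α ^ 2) with hG
  have hmpos : ∀ t, 0 < max (sin t ^ 2) (sin α ^ 2) := fun t => lt_max_of_lt_right (by positivity)
  have hGc : Continuous G := by
    refine continuous_const.div (by fun_prop) (fun t => (hmpos t).ne')
  have hGpos : ∀ t, 0 < G t := fun t => by have := hmpos t; simp only [hG]; positivity
  have hGκ : ∀ t, G t ≤ 1 / sin α ^ 2 := fun t =>
    one_div_le_one_div_of_le (by positivity) (le_max_right _ _)
  have hGs : ∀ t, G t * sin t ^ 2 ≤ 1 := fun t => by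
    simp only [hG]
    rw [one_div_mul_eq_div, div_le_one (hmpos t)]
    exact le_max_left _ _
  have hGp : Function.Periodic G π := fun t => by simp [hG, sin_add_pi]
  have hGi : ∀ x y, IntervalIntegrable G volume x y := fun x y => hGc.intervalIntegrable x y
  -- primitive
  have hH : ACD T (fun x => ∫ t in (0:ℝ)..(θ x), G t)
      (fun x => G (θ x) * (ω + b x * sin (θ x) ^ 2)) :=
    hθ.comp (F := fun y => ∫ t in (0:ℝ)..y, G t) (F' := G)
      (fun y => intervalIntegral.integral_hasDerivAt_right (hGi _ _)
        hGc.aestronglyMeasurable.stronglyMeasurableAtFilter hGc.continuousAt) hGc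
  have hIntA := hH.integral_eq (x := 0) (y := T) (by simp) (by simp)
  have hlow : (2 * (n : ℝ) + 1) * (2 * α / sin α ^ 2 + 2 * Real.cot α) ≤
      (∫ t in (0:ℝ)..(θ T), G t) - ∫ t in (0:ℝ)..(θ 0), G t := by
    rw [intervalIntegral.integral_interval_sub_left (hGi _ _) (hGi _ _)]
    have h1 := hGp.intervalIntegral_add_zsmul_eq (2 * n + 1) (θ 0) hGi
    rw [hGp.intervalIntegral_add_eq (θ 0) 0, zero_add, intG hα0 hα1] at h1
    simp only [zsmul_eq_mul] at h1
    push_cast at h1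
    rw [← h1, ← intervalIntegral.integral_add_adjacent_intervals
      (hGi (θ 0) (θ 0 + (2 * (n:ℝ) + 1) * π)) (hGi _ (θ T))]
    have : 0 ≤ ∫ t in (θ 0 + (2 * (n:ℝ) + 1) * π)..(θ T), G t :=
      intervalIntegral.integral_nonneg (by linarith) (fun t _ => (hGpos t).le)
    linarith
  have hθc : ContinuousOn θ (Set.Icc 0 T) := by
    have := hθ.1.continuousOn
    rwa [Set.uIcc_of_le hT.le] at this
  -- a point where sin² = 1
  obtain ⟨c, hc, hcs⟩ : ∃ c ∈ Set.Icc 0 T, sin (θ c) ^ 2 = 1 := by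
    set k : ℤ := ⌈(θ 0 - π / 2) / π⌉ with hk
    have k1 := Int.le_ceil ((θ 0 - π / 2) / π)
    have k2 := Int.ceil_lt_add_one ((θ 0 - π / 2) / π)
    rw [← hk] at k1 k2
    rw [div_le_iff₀ hpi] at k1
    have k3 : (k : ℝ) * π < θ 0 - π / 2 + π := by
      have := mul_lt_mul_of_pos_right k2 hpi
      rw [add_mul, div_mul_cancel₀ _ hpi.ne'] at this
      linarith
    have hmem : π / 2 + k * π ∈ Set.Icc (θ 0) (θ T) := by
      constructor
      · linarith
      · nlinarith
    obtain ⟨c, hc, hcc⟩ := intermediate_value_Icc hT.le hθc hmem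
    refine ⟨c, hc, ?_⟩
    have : cos (θ c) = 0 := by
      rw [hcc, Real.cos_eq_zero_iff]
      exact ⟨k, by ring⟩
    have h2 := sin_sq_add_cos_sq (θ c)
    rw [this] at h2
    linarith
  have hpos : 0 < ∫ x in (0:ℝ)..T, (1 / sin α ^ 2 - G (θ x)) * ω := by
    refine intervalIntegral.integral_pos hT ?_ ?_ ⟨c, hc, ?_⟩
    · exact (continuousOn_const.sub (hGc.comp_continuousOn hθc)).mul continuousOn_const
    · intro x _
      exact mul_nonneg (by linarith [hGκ (θ x)]) hω.le
    · refine mul_pos ?_ hω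
      have h3 : sin α ^ 2 < 1 := by nlinarith
      have : G (θ c) = 1 := by
        simp only [hG]
        rw [hcs, max_eq_left h3.le]; norm_num
      rw [this, sub_pos]
      exact one_lt_one_div (by positivity) h3
  have hci : IntervalIntegrable (fun x => (1 / sin α ^ 2 - G (θ x)) * ω) volume 0 T := by
    apply ContinuousOn.intervalIntegrable
    rw [Set.uIcc_of_le hT.le]
    exact (continuousOn_const.sub (hGc.comp_continuousOn hθc)).mul continuousOn_const
  have hmono : (∫ x in (0:ℝ)..T, (G (θ x) * (ω + b x * sin (θ x) ^ 2) +
      (1 / sin α ^ 2 - G (θ x)) * ω - 1 / sin α ^ 2 * ω)) ≤ ∫ x in (0:ℝ)..T, b x := by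
    refine intervalIntegral.integral_mono_ae_restrict hT.le
      ((hH.integrable.add hci).sub intervalIntegrable_const) hb ?_
    refine (ae_restrict_iff' measurableSet_Icc).2 ?_
    filter_upwards [hb0] with x hx hxx
    have h1 := mul_le_mul_of_nonneg_left (hGs (θ x)) (hx hxx)
    nlinarith
  rw [intervalIntegral.integral_sub (hH.integrable.add hci) intervalIntegrable_const,
    intervalIntegral.integral_add hH.integrable hci, hIntA,
    intervalIntegral.integral_const] at hmono
  have hkey : (2 * (n : ℝ) + 1) * (2 * α / sin α ^ 2) = 1 / sin α ^ 2 * (ω * T) := by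
    rw [hωT, hα]
    have : (2 * (n : ℝ) + 1) ≠ 0 := by positivity
    field_simp
  simp only [smul_eq_mul, sub_zero] at hmono
  nlinarith

lemma main_aux {T ω : ℝ} (hT : 0 < T) (hω : 0 < ω) {n : ℕ} (hn : 1 ≤ n)
    (hωT : ω * T = (2 * (n : ℝ) - 1) * π) {a u v : ℝ → ℝ}
    (ha : IntervalIntegrable a volume 0 T)
    (ha0 : ∀ᵐ x, x ∈ Set.Icc 0 T → ω ^ 2 ≤ a x)
    (ha1 : 0 < volume {x ∈ Set.Icc 0 T | ω ^ 2 < a x})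
    (hu : ACD T u v) (hv : ACD T v (fun x => -(a x * u x)))
    (huT : u 0 + u T = 0) (hvT : v 0 + v T = 0) {x₁ : ℝ} (hx₁ : x₁ ∈ Set.Icc 0 T)
    (hne : u x₁ ≠ 0) :
    2 * (2 * (n : ℝ) + 1) * Real.cot ((2 * (n : ℝ) - 1) * π / (2 * (2 * (n : ℝ) + 1)))
      < ∫ x in (0:ℝ)..T, (a x - ω ^ 2) / ω := by
  have hIcc : Set.uIcc 0 T = Set.Icc 0 T := Set.uIcc_of_le hT.le
  have huc := hu.1.continuousOn
  have hvc := hv.1.continuousOn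
  set R : ℝ → ℝ := fun x => v x * v x + ω ^ 2 * (u x * u x) with hRdef
  have hR : ACD T R (fun x => 2 * (u x * v x) * (ω ^ 2 - a x)) := by
    refine ((hv.mul hv).add ((hu.mul hu).const_mul (ω ^ 2))).congr_deriv ?_
    filter_upwards with x hx
    ring
  have hRnn : ∀ x, 0 ≤ R x := fun x => by simp only [hRdef]; nlinarith [sq_nonneg (v x), sq_nonneg (ω * u x)]
  have hbnd : ∀ x, |2 * (u x * v x) * (ω ^ 2 - a x)| ≤ |ω ^ 2 - a x| / ω * R x := by
    intro x
    rw [abs_mul, div_mul_eq_mul_div, le_div_iff₀ hω]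
    have : |2 * (u x * v x)| * ω ≤ R x := by
      have e : |2 * (u x * v x)| * ω = |2 * (u x * v x) * ω| := by
        rw [abs_mul _ ω, abs_of_pos hω]
      rw [e, abs_le]
      simp only [hRdef]
      constructor
      · nlinarith [sq_nonneg (v x + ω * u x)]
      · nlinarith [sq_nonneg (v x - ω * u x)]
    nlinarith [abs_nonneg (ω ^ 2 - a x)]
  have hki : IntervalIntegrable (fun x => |ω ^ 2 - a x| / ω) volume 0 T :=
    ((intervalIntegrable_const.sub ha).abs).div_const ω
  have hK := ACD.of_integral hki
  set K : ℝ → ℝ := fun x => ∫ t in (0:ℝ)..x, |ω ^ 2 - a t| / ω with hKdef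
  have hexp : ACD T (fun x => exp (K x)) (fun x => exp (K x) * (|ω ^ 2 - a x| / ω)) :=
    hK.comp (F := exp) (F' := exp) (fun y => Real.hasDerivAt_exp y) Real.continuous_exp
  have hexpn : ACD T (fun x => exp (-1 * K x)) (fun x => exp (-1 * K x) * (-1 * (|ω ^ 2 - a x| / ω))) :=
    (hK.const_mul (-1)).comp (F := exp) (F' := exp) (fun y => Real.hasDerivAt_exp y) Real.continuous_exp
  have hRpos : ∀ x ∈ Set.Icc 0 T, 0 < R x := by
    intro x₀ hx₀
    rcases (hRnn x₀).lt_or_eq with h | h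
    · exact h
    exfalso
    have hRx1 : 0 < R x₁ := by
      simp only [hRdef]
      have : 0 < u x₁ * u x₁ := mul_self_pos.2 hne
      have := mul_self_nonneg (v x₁)
      positivity
    rcases le_total x₁ x₀ with hle | hle
    · have := (hR.mul hexp).le hT.le hx₁ hx₀ hle (by
        filter_upwards with x hx
        have h1 := neg_le_of_abs_le (hbnd x)
        have h2 := exp_pos (K x)
        nlinarith)
      simp only [← h, zero_mul] at this
      have h2 := mul_pos hRx1 (exp_pos (K x₁))
      linarith
    · have := ((hR.mul hexpn).const_mul (-1)).le hT.le hx₀ hx₁ hle (by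
        filter_upwards with x hx
        have h1 := le_of_abs_le (hbnd x)
        have h2 := exp_pos (-1 * K x)
        nlinarith)
      simp only [← h, zero_mul] at this
      have h2 := mul_pos hRx1 (exp_pos (-1 * K x₁))
      linarith
  -- integrands
  have hRc : ContinuousOn R (Set.uIcc 0 T) := hR.1.continuousOn
  have hRne : ∀ x ∈ Set.uIcc 0 T, R x ≠ 0 := fun x hx => (hRpos x (hIcc ▸ hx)).ne'
  have hgre : IntervalIntegrable (fun x => (ω ^ 2 - a x) * (u x * v x / R x)) volume 0 T :=
    (intervalIntegrable_const.sub ha).mul_continuousOn ((huc.mul hvc).div hRc hRne)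
  have hgim : IntervalIntegrable (fun x => ω * (v x * v x) / R x + a x * (ω * (u x * u x) / R x))
      volume 0 T := by
    refine IntervalIntegrable.add ?_ ?_
    · exact ContinuousOn.intervalIntegrable (((continuousOn_const.mul (hvc.mul hvc))).div hRc hRne)
    · exact ha.mul_continuousOn ((continuousOn_const.mul (huc.mul huc)).div hRc hRne)
  set z₀ : ℂ := ⟨v 0, ω * u 0⟩ with hz₀
  set θ₀ : ℝ := Complex.arg z₀ with hθ₀
  set ρ₀ : ℝ := ‖z₀‖ with hρ₀
  have hv0 : v 0 = ρ₀ * cos θ₀ := (Complex.norm_mul_cos_arg z₀).symm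
  have hu0 : ω * u 0 = ρ₀ * sin θ₀ := (Complex.norm_mul_sin_arg z₀).symm
  have hR0 : R 0 = ρ₀ ^ 2 := by
    simp only [hRdef]
    rw [show ω ^ 2 * (u 0 * u 0) = (ω * u 0) ^ 2 by ring, hu0, hv0]
    nlinarith [sin_sq_add_cos_sq θ₀]
  have hρ₀pos : 0 < ρ₀ := by
    have h1 := hRpos 0 ⟨le_rfl, hT.le⟩
    have h2 : 0 ≤ ρ₀ := norm_nonneg _
    rcases h2.lt_or_eq with h | h
    · exact h
    · rw [hR0, ← h] at h1; simp at h1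
  have hE := ACD.of_integral hgre
  have hθ' := (ACD.const T θ₀).add (ACD.of_integral hgim)
  set E : ℝ → ℝ := fun x => ∫ t in (0:ℝ)..x, (ω ^ 2 - a t) * (u t * v t / R t) with hEdef
  set θ : ℝ → ℝ := fun x => θ₀ + ∫ t in (0:ℝ)..x,
    (ω * (v t * v t) / R t + a t * (ω * (u t * u t) / R t)) with hθdef
  have hE0 : E 0 = 0 := by simp [hEdef]
  have hθ0 : θ 0 = θ₀ := by simp [hθdef]
  have hcos := hθ'.comp (F := cos) (F' := fun y => - sin y) Real.hasDerivAt_cos (by fun_prop)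
  have hsin := hθ'.comp (F := sin) (F' := cos) Real.hasDerivAt_sin (by fun_prop)
  have heE := (hE.const_mul (-1)).comp (F := exp) (F' := exp)
    (fun y => Real.hasDerivAt_exp y) Real.continuous_exp
  have hP := heE.mul ((hv.mul hcos).add ((hu.const_mul ω).mul hsin))
  have hQ := heE.mul (((hu.const_mul ω).mul hcos).add ((hv.mul hsin).const_mul (-1)))
  have hP0 := hP.congr_deriv (g' := fun _ => 0) (by
    filter_upwards with x hx
    have := hRne x hx
    field_simp
    simp only [hRdef]
    ring)
  have hQ0 := hQ.congr_deriv (g' := fun _ => 0) (by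
    filter_upwards with x hx
    have := hRne x hx
    field_simp
    simp only [hRdef]
    ring)
  have hrep : ∀ x ∈ Set.Icc 0 T, ∃ ρ : ℝ, 0 < ρ ∧ v x = ρ * cos (θ x) ∧ ω * u x = ρ * sin (θ x) := by
    intro x hx
    have p := hP0.integral_eq (x := 0) (y := x) (by simp) (hIcc ▸ hx)
    have q := hQ0.integral_eq (x := 0) (y := x) (by simp) (hIcc ▸ hx)
    simp only [intervalIntegral.integral_zero, hE0, hθ0, mul_zero, exp_zero, one_mul] at p q
    rw [hu0, hv0] at p q
    have hsc := sin_sq_add_cos_sq (θ x)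
    have hsc0 := sin_sq_add_cos_sq θ₀
    have hee : exp (E x) * exp (-1 * E x) = 1 := by rw [← exp_add]; simp
    have p1 : v x * cos (θ x) + ω * u x * sin (θ x) = ρ₀ * exp (E x) := by
      have : exp (-1 * E x) * (v x * cos (θ x) + ω * u x * sin (θ x)) = ρ₀ := by
        linear_combination -p + ρ₀ * hsc0
      linear_combination exp (E x) * this - (v x * cos (θ x) + ω * u x * sin (θ x)) * hee
    have q1 : ω * u x * cos (θ x) - v x * sin (θ x) = 0 := by
      have : exp (-1 * E x) * (ω * u x * cos (θ x) - v x * sin (θ x)) = 0 := by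
        linear_combination -q
      linear_combination exp (E x) * this - (ω * u x * cos (θ x) - v x * sin (θ x)) * hee
    refine ⟨ρ₀ * exp (E x), by positivity, ?_, ?_⟩
    · linear_combination cos (θ x) * p1 - sin (θ x) * q1 - v x * hsc
    · linear_combination sin (θ x) * p1 + cos (θ x) * q1 - ω * u x * hsc
  have hθd : ACD T θ (fun x => ω + (a x - ω ^ 2) / ω * sin (θ x) ^ 2) := by
    refine hθ'.congr_deriv ?_
    filter_upwards with x hx
    obtain ⟨ρ, hρ, h1, h2⟩ := hrep x (hIcc ▸ hx)
    have h3 : R x = ρ ^ 2 := by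
      simp only [hRdef]
      rw [show ω ^ 2 * (u x * u x) = (ω * u x) ^ 2 by ring, h2, h1]
      nlinarith [sin_sq_add_cos_sq (θ x)]
    have h4 : u x = ρ * sin (θ x) / ω := by field_simp; linarith
    rw [h3, h4, h1]
    field_simp
    linear_combination ω ^ 2 * sin_sq_add_cos_sq (θ x)
  have hbi : IntervalIntegrable (fun x => (a x - ω ^ 2) / ω) volume 0 T :=
    (ha.sub intervalIntegrable_const).div_const ω
  have hb0 : ∀ᵐ x, x ∈ Set.Icc 0 T → 0 ≤ (a x - ω ^ 2) / ω := by
    filter_upwards [ha0] with x h hx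
    exact div_nonneg (by linarith [h hx]) hω.le
  refine core hT hω hn hωT hθd hbi hb0 ?_
  -- the rise
  have hrise1 : ∃ k : ℤ, π + k * (2 * π) = θ T - θ 0 := by
    rw [← Real.cos_eq_neg_one_iff, cos_sub]
    obtain ⟨ρ, hρ, h1, h2⟩ := hrep T ⟨hT.le, le_rfl⟩
    have h3 : ρ ^ 2 = ρ₀ ^ 2 := by
      have e1 : ρ ^ 2 = v T ^ 2 + (ω * u T) ^ 2 := by
        rw [h1, h2]; linear_combination (-ρ ^ 2) * sin_sq_add_cos_sq (θ T)
      have e2 : ρ₀ ^ 2 = v 0 ^ 2 + (ω * u 0) ^ 2 := by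
        rw [hv0, hu0]; linear_combination (-ρ₀ ^ 2) * sin_sq_add_cos_sq θ₀
      rw [e1, e2, show v T = - v 0 by linarith, show u T = - u 0 by linarith]; ring
    have h4 : ρ = ρ₀ := (sq_eq_sq₀ hρ.le hρ₀pos.le).1 h3
    rw [h4] at h1 h2
    have c1 : cos (θ T) = - cos θ₀ := by
      apply mul_left_cancel₀ hρ₀pos.ne'
      linarith
    have s1 : sin (θ T) = - sin θ₀ := by
      apply mul_left_cancel₀ hρ₀pos.ne'
      nlinarith
    rw [hθ0, c1, s1]
    linear_combination -sin_sq_add_cos_sq θ₀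
  have hstrict : ω * T < θ T - θ 0 := by
    have hIntA := hθd.integral_eq (x := 0) (y := T) (by simp) (by simp)
    have hIntB : IntervalIntegrable (fun x => (a x - ω ^ 2) / ω * sin (θ x) ^ 2) volume 0 T := by
      refine hbi.mul_continuousOn ?_
      exact hsin.1.continuousOn.pow 2
    rw [intervalIntegral.integral_add intervalIntegrable_const hIntB,
      intervalIntegral.integral_const] at hIntA
    simp only [sub_zero, smul_eq_mul] at hIntA
    have hpos : 0 < ∫ x in (0:ℝ)..T, (a x - ω ^ 2) / ω * sin (θ x) ^ 2 := by
      have hnn : 0 ≤ᵐ[volume.restrict (Set.Ioc 0 T)] (fun x => (a x - ω ^ 2) / ω * sin (θ x) ^ 2) := by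
        refine (ae_restrict_iff' measurableSet_Ioc).2 ?_
        filter_upwards [hb0] with x h hx
        exact mul_nonneg (h (Ioc_subset_Icc_self hx)) (sq_nonneg _)
      rw [intervalIntegral.integral_of_le hT.le,
        integral_pos_iff_support_of_nonneg_ae hnn ((intervalIntegrable_iff_integrableOn_Ioc_of_le hT.le).1 hIntB),
        Measure.restrict_apply₀' measurableSet_Ioc.nullMeasurableSet]
      -- zeros are countable
      have hinj : Set.InjOn θ (Set.Icc 0 T) := by
        have hmono : ∀ x ∈ Set.Icc 0 T, ∀ y ∈ Set.Icc 0 T, x < y → θ x < θ y := by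
          intro x hx y hy hxy
          have hid : ACD T (fun x => -ω * x) (fun _ => -ω * 1) :=
            ACD.const_mul (-ω) (f := fun x => x) (f' := fun _ => 1)
              ⟨contDiff_id.contDiffOn.absolutelyContinuousOnInterval, by
                filter_upwards with x _; exact hasDerivAt_id x⟩
          have := (hθd.add hid).le hT.le hx hy hxy.le (by
            filter_upwards [hb0] with t h ht
            have := mul_nonneg (h ht) (sq_nonneg (sin (θ t)))
            linarith)
          nlinarith
        intro x hx y hy hxy
        rcases lt_trichotomy x y with h | h | h
        · exact absurd hxy (hmono x hx y hy h).ne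
        · exact h
        · exact absurd hxy (hmono y hy x hx h).ne'
      have hcount : {x ∈ Set.Icc 0 T | sin (θ x) = 0}.Countable := by
        have : {x ∈ Set.Icc 0 T | sin (θ x) = 0} ⊆
            Set.Icc 0 T ∩ θ ⁻¹' (Set.range (fun k : ℤ => (k : ℝ) * π)) := by
          rintro x ⟨hx, hs⟩
          exact ⟨hx, Real.sin_eq_zero_iff.1 hs⟩
        refine Set.Countable.mono this ?_
        refine Set.MapsTo.countable_of_injOn (f := θ) (t := Set.range (fun k : ℤ => (k : ℝ) * π))
          (fun x hx => hx.2) (hinj.mono Set.inter_subset_left) (Set.countable_range _)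
      have hnull : volume ({x ∈ Set.Icc 0 T | sin (θ x) = 0} ∪ {0}) = 0 :=
        (hcount.union (Set.countable_singleton 0)).measure_zero _
      refine lt_of_lt_of_le ha1 ?_
      rw [← measure_sdiff_null hnull]
      refine measure_mono ?_
      rintro x ⟨⟨hx, hax⟩, hnx⟩
      simp only [Set.mem_union, Set.mem_singleton_iff, not_or] at hnx
      refine ⟨?_, lt_of_le_of_ne hx.1 (Ne.symm hnx.2), hx.2⟩
      have hs : sin (θ x) ≠ 0 := fun h => hnx.1 ⟨hx, h⟩
      have : 0 < a x - ω ^ 2 := by linarith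
      rw [Function.mem_support]
      positivity
    linarith
  obtain ⟨k, hk⟩ := hrise1
  rw [hωT, ← hk] at hstrict
  have hkn : (n : ℤ) - 1 < k := by
    have : ((n : ℝ) - 1) * (2 * π) < k * (2 * π) := by linarith
    have := lt_of_mul_lt_mul_right this (by positivity)
    exact_mod_cast this
  have hkn' : (n : ℝ) ≤ k := by
    have : (n : ℤ) ≤ k := by omega
    exact_mod_cast this
  rw [← hk]
  nlinarith [pi_pos]

theorem stmt11 (T : ℝ) (hT : 0 < T) (n : ℕ) (hn : 1 ≤ n)
    (a : ℝ → ℝ) (hLT : MemLT T a)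
    (hprec : Prec T (fun _ => lamT T n) a)
    (hnorm : (∫ x in (0:ℝ)..T, |a x|) ≤ T * lamT T n + betaT1 T n) :
    ∀ u v : ℝ → ℝ, AntiperiodicSol T a u v → ∀ x ∈ Set.Icc 0 T, u x = 0 := by
  rintro u v ⟨⟨hu, hv⟩, huT, hvT⟩ x hx
  by_contra hne
  have hn' : (1 : ℝ) ≤ n := by exact_mod_cast hn
  have hIcc : Set.uIcc 0 T = Set.Icc 0 T := Set.uIcc_of_le hT.le
  have ha : IntervalIntegrable a volume 0 T :=
    (intervalIntegrable_iff_integrableOn_Icc_of_le hT.le).2 hLT.2.2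
  have hω : 0 < (2 * (n : ℝ) - 1) * π / T := by
    have : 0 < 2 * (n : ℝ) - 1 := by linarith
    positivity
  set ω := (2 * (n : ℝ) - 1) * π / T with hωdef
  have hlam : lamT T n = ω ^ 2 := by rw [lamT, hωdef]; ring
  rw [hlam] at hprec hnorm
  have ha0 : ∀ᵐ x, x ∈ Set.Icc 0 T → ω ^ 2 ≤ a x :=
    (ae_restrict_iff' measurableSet_Icc).1 hprec.1
  have huc : ContinuousOn u (Set.Icc 0 T) := fun x hx => (hu x hx).continuousWithinAt
  have hau : IntervalIntegrable (fun t => a t * u t) volume 0 T :=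
    ha.mul_continuousOn (hIcc ▸ huc)
  have hends : ∀ᵐ x : ℝ, x ≠ 0 ∧ x ≠ T := by
    have h1 : ∀ᵐ x : ℝ, x ≠ 0 := by simp [ae_iff, measure_singleton]
    have h2 : ∀ᵐ x : ℝ, x ≠ T := by simp [ae_iff, measure_singleton]
    filter_upwards [h1, h2] with x a b using ⟨a, b⟩
  have hnh : ∀ x, x ∈ Set.uIcc 0 T → x ≠ 0 ∧ x ≠ T → Set.Icc 0 T ∈ nhds x := by
    intro x hx h
    rw [hIcc] at hx
    exact Icc_mem_nhds (lt_of_le_of_ne hx.1 (Ne.symm h.1)) (lt_of_le_of_ne hx.2 h.2)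
  have hvA0 := (ACD.const T (v 0)).add ((ACD.of_integral hau).const_mul (-1))
  have hveq : Set.EqOn v (fun x => v 0 + -1 * ∫ t in (0:ℝ)..x, a t * u t) (Set.Icc 0 T) := by
    intro x hx
    simp only [hv x hx]
    ring
  have hvA : ACD T v (fun x => -(a x * u x)) := by
    refine ⟨?_, ?_⟩
    · have h := hvA0.1
      rw [absolutelyContinuousOnInterval_iff] at h ⊢
      intro ε hε
      obtain ⟨δ, hδ, H⟩ := h ε hε
      refine ⟨δ, hδ, fun I hI hI2 => ?_⟩
      refine lt_of_eq_of_lt (Finset.sum_congr rfl fun i hi => ?_) (H I hI hI2)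
      have m1 := (hI.1 i hi).1
      have m2 := (hI.1 i hi).2
      rw [hIcc] at m1 m2
      exact congrArg₂ dist (hveq m1) (hveq m2)
    · filter_upwards [hvA0.2, hends] with x h1 h2 hx
      have h3 := h1 hx
      simp only [zero_add, neg_mul, one_mul] at h3
      refine h3.congr_of_eventuallyEq ?_
      filter_upwards [hnh x hx h2] with y hy
      rw [hveq hy]; ring
  have huA : ACD T u v := by
    refine ⟨?_, ?_⟩
    · obtain ⟨C, hC⟩ := isCompact_Icc.exists_bound_of_continuousOn (hIcc ▸ hvA.1.continuousOn)
      refine LipschitzOnWith.absolutelyContinuousOnInterval (K := C.toNNReal) ?_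
      rw [hIcc]
      refine (convex_Icc 0 T).lipschitzOnWith_of_nnnorm_hasDerivWithin_le (f' := v) hu ?_
      intro y hy
      rw [← NNReal.coe_le_coe, coe_nnnorm]
      exact (hC y hy).trans (Real.le_coe_toNNReal C)
    · filter_upwards [hends] with x h2 hx
      exact (hu x (hIcc ▸ hx)).hasDerivAt (hnh x hx h2)
  have key := main_aux hT hω hn (by rw [hωdef]; field_simp) ha ha0 hprec.2 huA hvA huT hvT hx hne
  have habs : (∫ x in (0:ℝ)..T, |a x|) = ∫ x in (0:ℝ)..T, a x := by
    apply intervalIntegral.integral_congr_ae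
    filter_upwards [ha0] with x h hx
    rw [Set.uIoc_of_le hT.le] at hx
    exact abs_of_nonneg ((sq_nonneg ω).trans (h (Ioc_subset_Icc_self hx)))
  rw [habs] at hnorm
  rw [intervalIntegral.integral_div, intervalIntegral.integral_sub ha intervalIntegrable_const,
    intervalIntegral.integral_const, lt_div_iff₀ hω] at key
  simp only [sub_zero, smul_eq_mul] at key
  have hb : betaT1 T n = 2 * (2 * (n : ℝ) + 1) *
      Real.cot ((2 * (n : ℝ) - 1) * π / (2 * (2 * (n : ℝ) + 1))) * ω := by
    rw [betaT1, hωdef]; ring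
  rw [hb] at hnorm
  linarith
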